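/- arXiv:2306.12923 — 5 statements merged into one kernel-verified Lean document; each statement's English description precedes it below -/
import Mathlib

section
/- Let ξ ⊆ ℕ⁴ be downward closed and let □ = (n₁,n₂,n₃,n₄) ∈ ξ. Then S₋(□) ⊆ ξ (so ξ ∩ S₋(□) = S₋(□)), the set S₋(□) is finite, and its cardinality is odd if and only if n₁ = n₂ = n₃ < n₄. In particular, |ξ ∩ S₋(□)| is even unless there exists □' ∈ ξ ∩ (□ − ℕ·(1,1,1,1)) of the form □' = (0,0,0,d) with d > 0. -/
open scoped BigOperators

/-- A subset of `ℕ^d` is downward closed if it contains `p − e` whenever it contains `p`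
and `p − e ∈ ℕ^d`, for a standard basis vector `e`. -/
def DownClosed {d : ℕ} (S : Set (Fin d → ℕ)) : Prop :=
  ∀ p ∈ S, ∀ i : Fin d, 0 < p i → Function.update p i (p i - 1) ∈ S

/-- `proj i` deletes the `i`-th coordinate of a point of `ℕ⁴`. -/
def proj (i : Fin 4) (p : Fin 4 → ℕ) : Fin 3 → ℕ := fun j => p (i.succAbove j)

/-- A plane partition is a finite downward closed subset of `ℕ³`. -/
def IsPlanePartition (π : Set (Fin 3 → ℕ)) : Prop := π.Finite ∧ DownClosed π

/-- A solid partition with legs `(π 0, π 1, π 2, π 3)`: a downward closed subset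
`ξ ⊆ ℕ⁴` such that, far enough along the `i`-th axis, membership in `ξ` is governed by
the plane partition `π i`. -/
def IsSolidPartitionWithLegs (π : Fin 4 → Set (Fin 3 → ℕ)) (ξ : Set (Fin 4 → ℕ)) : Prop :=
  (∀ i, IsPlanePartition (π i)) ∧ DownClosed ξ ∧
    ∃ N : ℕ, ∀ i : Fin 4, ∀ p : Fin 4 → ℕ, N ≤ p i → (p ∈ ξ ↔ proj i p ∈ π i)

/-- The number of legs containing a box. -/
noncomputable def nlegs (π : Fin 4 → Set (Fin 3 → ℕ)) (p : Fin 4 → ℕ) : ℕ :=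
  {i : Fin 4 | proj i p ∈ π i}.ncard

/-- `S₋(□) = {□ − (ε₁,ε₂,ε₃,1) − m·(1,1,1,1) : ε ∈ {0,1}³, m ∈ ℕ} ∩ ℕ⁴`. -/
def Sminus (n : Fin 4 → ℕ) : Set (Fin 4 → ℕ) :=
  { x | ∃ ε : Fin 3 → ℕ, (∀ t, ε t ≤ 1) ∧ ∃ m : ℕ,
      ∀ t : Fin 4, (x t : ℤ) =
        (n t : ℤ) - (if h : (t : ℕ) < 3 then (ε ⟨t, h⟩ : ℤ) else 1) - (m : ℤ) }

/-- `S₊(□) = {□ + (ε₁,ε₂,ε₃,0) + m·(1,1,1,1) : ε ∈ {0,1}³, m ∈ ℕ}`. -/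
def Splus (n : Fin 4 → ℕ) : Set (Fin 4 → ℕ) :=
  { x | ∃ ε : Fin 3 → ℕ, (∀ t, ε t ≤ 1) ∧ ∃ m : ℕ,
      ∀ t : Fin 4, x t = n t + (if h : (t : ℕ) < 3 then ε ⟨t, h⟩ else 0) + m }

theorem DownClosed.mem_of_le {d : ℕ} {S : Set (Fin d → ℕ)} (hS : DownClosed S)
    (q : Fin d → ℕ) : ∀ (k : ℕ) (p : Fin d → ℕ), p ∈ S → (∀ i, q i ≤ p i) →
      ∑ i, p i = k → q ∈ S := by
  intro k
  induction k with
  | zero =>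
    intro p hp hle hk
    have h0 : ∀ i, p i = 0 := by simpa using hk
    have : q = p := by
      funext i
      have := hle i
      have := h0 i
      omega
    exact this ▸ hp
  | succ k ih =>
    intro p hp hle hk
    by_cases h : ∀ i, p i ≤ q i
    · have : q = p := by
        funext i
        exact le_antisymm (hle i) (h i)
      exact this ▸ hp
    · push Not at h
      obtain ⟨i, hi⟩ := h
      have hpos : 0 < p i := by omega
      refine ih _ (hS p hp i hpos) ?_ ?_
      · intro j
        by_cases hj : j = i
        · subst hj
          simp only [Function.update_self]
          omega
        · simpa [Function.update_of_ne hj] using hle j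
      · have h1 := Finset.sum_update_of_mem (Finset.mem_univ i) p (p i - 1)
        have h2 := Finset.add_sum_erase Finset.univ p (Finset.mem_univ i)
        rw [Finset.erase_eq] at h2
        omega

/-- The possible values of a coordinate `a - ε - m` in `ℕ`, with `ε ∈ {0, 1}`. -/
def fiberA (a m : ℕ) : Finset ℕ :=
  (Finset.range (a + 1)).filter (fun x => x + m ≤ a ∧ a ≤ x + m + 1)

theorem mem_fiberA (a m x : ℕ) : x ∈ fiberA a m ↔ x + m ≤ a ∧ a ≤ x + m + 1 := by
  simp only [fiberA, Finset.mem_filter, Finset.mem_range]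
  omega

theorem odd_card_fiberA (a m : ℕ) : Odd (fiberA a m).card ↔ m = a := by
  rcases lt_trichotomy m a with h | h | h
  · have : fiberA a m = {a - m, a - m - 1} := by
      ext x
      simp only [mem_fiberA, Finset.mem_insert, Finset.mem_singleton]
      omega
    rw [this, Finset.card_pair (by omega)]
    constructor
    · intro h2
      exact absurd h2 (by decide)
    · omega
  · have : fiberA a m = {0} := by
      ext x
      simp only [mem_fiberA, Finset.mem_singleton]
      omega
    rw [this]
    simp [h]
  · have : fiberA a m = ∅ := by
      ext x
      simp only [mem_fiberA, Finset.notMem_empty, iff_false]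
      omega
    rw [this]
    simp
    omega

/-- The parameters of the points of `Sminus n`. -/
def paramT (n : Fin 4 → ℕ) : Finset (Σ _ : ℕ, ℕ × ℕ × ℕ) :=
  (Finset.range (n 3)).sigma
    (fun m => fiberA (n 0) m ×ˢ fiberA (n 1) m ×ˢ fiberA (n 2) m)

/-- The point of `Sminus n` with given parameters. -/
def paramMap (n : Fin 4 → ℕ) (p : Σ _ : ℕ, ℕ × ℕ × ℕ) : Fin 4 → ℕ :=
  ![p.2.1, p.2.2.1, p.2.2.2, n 3 - 1 - p.1]

theorem mem_Sminus_iff (n x : Fin 4 → ℕ) : x ∈ Sminus n ↔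
    ∃ m : ℕ, x 3 + 1 + m = n 3 ∧ (x 0 + m ≤ n 0 ∧ n 0 ≤ x 0 + m + 1) ∧
      (x 1 + m ≤ n 1 ∧ n 1 ≤ x 1 + m + 1) ∧ (x 2 + m ≤ n 2 ∧ n 2 ≤ x 2 + m + 1) := by
  constructor
  · rintro ⟨ε, hε, m, h⟩
    have h0 := h 0
    have h1 := h 1
    have h2 := h 2
    have h3 := h 3
    have e0 := hε 0
    have e1 := hε 1
    have e2 := hε 2
    simp at h0 h1 h2 h3
    refine ⟨m, ?_, ?_, ?_, ?_⟩ <;> omega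
  · rintro ⟨m, h3, h0, h1, h2⟩
    refine ⟨![n 0 - x 0 - m, n 1 - x 1 - m, n 2 - x 2 - m], ?_, m, ?_⟩
    · intro t
      fin_cases t <;> simp <;> omega
    · intro t
      fin_cases t <;> simp <;> omega

theorem Sminus_eq_image (n : Fin 4 → ℕ) :
    Sminus n = ((paramT n).image (paramMap n) : Finset (Fin 4 → ℕ)) := by
  ext x
  rw [mem_Sminus_iff]
  simp only [Finset.coe_image, Set.mem_image, Finset.mem_coe, paramT, Finset.mem_sigma,
    Finset.mem_product, mem_fiberA, Finset.mem_range]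
  constructor
  · rintro ⟨m, h3, h0, h1, h2⟩
    refine ⟨⟨m, x 0, x 1, x 2⟩, ⟨by dsimp only; omega, h0, h1, h2⟩, ?_⟩
    funext t
    fin_cases t <;> simp [paramMap]
    omega
  · rintro ⟨⟨m, a, b, c⟩, ⟨hm, h0, h1, h2⟩, rfl⟩
    refine ⟨m, ?_, h0, h1, h2⟩
    simp [paramMap]
    dsimp only at hm
    omega

theorem card_Sminus (n : Fin 4 → ℕ) : (Sminus n).ncard = (paramT n).card := by
  rw [Sminus_eq_image, Set.ncard_coe_finset, Finset.card_image_of_injOn]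
  rintro ⟨m, a, b, c⟩ hp ⟨m', a', b', c'⟩ hq h
  simp only [paramT, Finset.coe_sigma, Set.mem_sigma_iff, Finset.mem_coe,
    Finset.mem_range] at hp hq
  have hp := hp.1
  have hq := hq.1
  have h0 : a = a' := congrFun h 0
  have h1 : b = b' := congrFun h 1
  have h2 : c = c' := congrFun h 2
  have h3 : n 3 - 1 - m = n 3 - 1 - m' := congrFun h 3
  have hm : m = m' := by omega
  subst h0 h1 h2 hm
  rfl

theorem odd_card_Sminus (n : Fin 4 → ℕ) :
    Odd (Sminus n).ncard ↔ (n 0 = n 1 ∧ n 1 = n 2 ∧ n 2 < n 3) := by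
  rw [card_Sminus, paramT, Finset.card_sigma, Finset.odd_sum_iff_odd_card_odd]
  simp only [Finset.card_product, Nat.odd_mul, odd_card_fiberA]
  by_cases h : n 0 = n 1 ∧ n 1 = n 2 ∧ n 2 < n 3
  · have : (Finset.range (n 3)).filter (fun m => m = n 0 ∧ m = n 1 ∧ m = n 2) = {n 0} := by
      ext m
      simp only [Finset.mem_filter, Finset.mem_range, Finset.mem_singleton]
      omega
    rw [this]
    simp [h]
  · have : (Finset.range (n 3)).filter (fun m => m = n 0 ∧ m = n 1 ∧ m = n 2) = ∅ := by
      ext m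
      simp only [Finset.mem_filter, Finset.mem_range, Finset.notMem_empty, iff_false]
      omega
    rw [this]
    simp only [Finset.card_empty, h, iff_false]
    decide

/-- Let `ξ ⊆ ℕ⁴` be downward closed and `□ = (n₁,n₂,n₃,n₄) ∈ ξ`.  Then
`S₋(□) ⊆ ξ` (so `ξ ∩ S₋(□) = S₋(□)`), `S₋(□)` is finite, and its cardinality is odd iff
`n₁ = n₂ = n₃ < n₄`.  In particular `|ξ ∩ S₋(□)|` is even unless there exists
`□' ∈ ξ ∩ (□ − ℕ·(1,1,1,1))` of the form `□' = (0,0,0,d)` with `d > 0`. -/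
theorem Sminus_parity
    (ξ : Set (Fin 4 → ℕ)) (hξ : DownClosed ξ) (n : Fin 4 → ℕ) (hn : n ∈ ξ) :
    Sminus n ⊆ ξ ∧ (ξ ∩ Sminus n = Sminus n) ∧ (Sminus n).Finite ∧
      (Odd (Sminus n).ncard ↔ (n 0 = n 1 ∧ n 1 = n 2 ∧ n 2 < n 3)) ∧
      (¬ Even ((ξ ∩ Sminus n).ncard) →
        ∃ x ∈ ξ, (∃ m : ℕ, ∀ t : Fin 4, (x t : ℤ) = (n t : ℤ) - (m : ℤ)) ∧
          x 0 = 0 ∧ x 1 = 0 ∧ x 2 = 0 ∧ 0 < x 3) := by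
  have hsub : Sminus n ⊆ ξ := by
    intro x hx
    rw [mem_Sminus_iff] at hx
    obtain ⟨m, h3, h0, h1, h2⟩ := hx
    refine hξ.mem_of_le x _ n hn ?_ rfl
    intro i
    fin_cases i <;> simp <;> omega
  have hinter : ξ ∩ Sminus n = Sminus n := Set.inter_eq_right.mpr hsub
  refine ⟨hsub, hinter, ?_, odd_card_Sminus n, ?_⟩
  · rw [Sminus_eq_image]
    exact Finset.finite_toSet _
  · intro h
    rw [hinter, Nat.not_even_iff_odd, odd_card_Sminus] at h
    obtain ⟨h0, h1, h2⟩ := h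
    refine ⟨fun t => n t - n 0, hξ.mem_of_le _ _ n hn (fun i => Nat.sub_le _ _) rfl,
      ⟨n 0, ?_⟩, ?_, ?_, ?_, ?_⟩
    · intro t
      fin_cases t <;> simp <;> omega
    all_goals dsimp only; omega
end

section
/- Let ξ be a solid partition with legs (π¹,π²,π³,π⁴) with π⁴ = ∅, and let □ ∈ ξ. Then ξ ∩ S₊(□) is finite and the sum Σ_{□' ∈ ξ ∩ S₊(□)} nlegs(□') is even. -/
open scoped BigOperators

theorem mem_Splus_iff (n x : Fin 4 → ℕ) :
    x ∈ Splus n ↔ n 3 ≤ x 3 ∧ ∀ i : Fin 4, i ≠ 3 →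
      (x i = n i + (x 3 - n 3) ∨ x i = n i + (x 3 - n 3) + 1) := by
  constructor
  · rintro ⟨ε, hε, m, h⟩
    have h3 : x 3 = n 3 + m := by simpa using h 3
    refine ⟨by omega, fun i hi => ?_⟩
    have hlt : (i : ℕ) < 3 := by
      have := i.isLt
      have : (i : ℕ) ≠ 3 := fun h => hi (Fin.ext h)
      omega
    have h1 := h i
    rw [dif_pos hlt] at h1
    have := hε ⟨i, hlt⟩
    omega
  · rintro ⟨h3, h⟩
    refine ⟨fun t => x t.castSucc - (n t.castSucc + (x 3 - n 3)), fun t => ?_, x 3 - n 3,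
      fun t => ?_⟩
    · have := h t.castSucc (Fin.castSucc_lt_last t).ne
      beta_reduce
      omega
    · by_cases ht : (t : ℕ) < 3
      · rw [dif_pos ht]
        have h1 := h t (fun h => by subst h; simp at ht)
        change x t = n t + (x t - (n t + (x 3 - n 3))) + (x 3 - n 3)
        omega
      · rw [dif_neg ht]
        have : t = 3 := Fin.ext (by have := t.isLt; change (t : ℕ) = 3; omega)
        subst this
        omega

theorem proj_update (i : Fin 4) (x : Fin 4 → ℕ) (a : ℕ) :
    proj i (Function.update x i a) = proj i x := by
  funext j
  simp [proj, Fin.succAbove_ne]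

theorem DownClosed.update_of_add {S : Set (Fin 4 → ℕ)} (hS : DownClosed S) (i : Fin 4)
    (x : Fin 4 → ℕ) (k : ℕ) (h : Function.update x i (x i + k) ∈ S) : x ∈ S := by
  induction k with
  | zero => simpa using h
  | succ k ih =>
    apply ih
    have := hS _ h i (by simp)
    simpa [← add_assoc] using this

theorem mem_of_proj_mem {π : Fin 4 → Set (Fin 3 → ℕ)} {ξ : Set (Fin 4 → ℕ)}
    (hξ : IsSolidPartitionWithLegs π ξ) (i : Fin 4) (x : Fin 4 → ℕ) (h : proj i x ∈ π i) :
    x ∈ ξ := by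
  obtain ⟨-, hd, N, hN⟩ := hξ
  refine hd.update_of_add i x N ((hN i _ (by simp)).2 ?_)
  rwa [proj_update]

/-- Flip the `i`-th bit of a point of `Splus n`. -/
def flipBit (n : Fin 4 → ℕ) (i : Fin 4) (x : Fin 4 → ℕ) : Fin 4 → ℕ :=
  Function.update x i (if x i = n i + (x 3 - n 3) then x i + 1 else x i - 1)

theorem flipBit_mem {n : Fin 4 → ℕ} {i : Fin 4} (hi : i ≠ 3) {x : Fin 4 → ℕ}
    (hx : x ∈ Splus n) : flipBit n i x ∈ Splus n := by
  rw [mem_Splus_iff] at hx ⊢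
  obtain ⟨h3, h⟩ := hx
  have e3 : flipBit n i x 3 = x 3 := by simp [flipBit, hi.symm]
  rw [e3]
  refine ⟨h3, fun j hj => ?_⟩
  have := h j hj
  by_cases hji : j = i
  · subst hji
    simp only [flipBit, Function.update_self]
    split_ifs <;> omega
  · simpa [flipBit, hji] using this

theorem flipBit_flipBit {n : Fin 4 → ℕ} {i : Fin 4} (hi : i ≠ 3) {x : Fin 4 → ℕ}
    (hx : x ∈ Splus n) : flipBit n i (flipBit n i x) = x := by
  rw [mem_Splus_iff] at hx
  have := hx.2 i hi
  have e3 : flipBit n i x 3 = x 3 := by simp [flipBit, hi.symm]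
  funext j
  by_cases hji : j = i
  · subst hji
    rw [flipBit, Function.update_self, e3]
    simp only [flipBit, Function.update_self]
    split_ifs <;> omega
  · simp [flipBit, hji]

theorem flipBit_ne {n : Fin 4 → ℕ} {i : Fin 4} (hi : i ≠ 3) {x : Fin 4 → ℕ}
    (hx : x ∈ Splus n) : flipBit n i x ≠ x := by
  rw [mem_Splus_iff] at hx
  have := hx.2 i hi
  intro h
  have h := congrFun h i
  simp only [flipBit, Function.update_self] at h
  split_ifs at h <;> omega

/-- Let `ξ` be a solid partition with legs `(π¹,π²,π³,π⁴)` with `π⁴ = ∅`,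
and let `□ ∈ ξ`.  Then `ξ ∩ S₊(□)` is finite and `Σ_{□' ∈ ξ ∩ S₊(□)} nlegs(□')` is
even. -/
theorem Splus_nlegs_sum_even
    (π : Fin 4 → Set (Fin 3 → ℕ)) (ξ : Set (Fin 4 → ℕ))
    (hξ : IsSolidPartitionWithLegs π ξ) (h4 : π 3 = ∅)
    (n : Fin 4 → ℕ) (hn : n ∈ ξ) :
    (ξ ∩ Splus n).Finite ∧ Even (∑ᶠ x ∈ ξ ∩ Splus n, nlegs π x) := by
  classical
  have hfin : (ξ ∩ Splus n).Finite := by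
    obtain ⟨-, -, N, hN⟩ := hξ
    refine (Set.finite_Iic (fun i => n i + N + 1)).subset ?_
    rintro x ⟨hx, hs⟩
    rw [mem_Splus_iff] at hs
    have h3 : x 3 < N := by
      by_contra hcon
      have := (hN 3 x (by omega)).1 hx
      simp [h4] at this
    intro i
    change x i ≤ n i + N + 1
    by_cases hi : i = 3
    · subst hi; omega
    · have := hs.2 i hi
      omega
  refine ⟨hfin, ?_⟩
  rw [finsum_mem_eq_finite_toFinset_sum _ hfin]
  have hl : ∀ x, nlegs π x = ∑ i : Fin 4, if proj i x ∈ π i then 1 else 0 := by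
    intro x
    rw [nlegs, Set.ncard_eq_toFinset_card', Finset.sum_boole]
    simp
  simp only [hl]
  rw [Finset.sum_comm]
  refine Finset.even_sum _ fun i _ => ?_
  by_cases hi : i = 3
  · subst hi; simp [h4]
  rw [← ZMod.natCast_eq_zero_iff_even, Finset.sum_boole, Nat.cast_id, Finset.card_eq_sum_ones,
    Nat.cast_sum]
  refine Finset.sum_involution (fun x _ => flipBit n i x) ?_ ?_ ?_ ?_
  · intros; decide
  · intro x hx _
    simp only [Finset.mem_filter, Set.Finite.mem_toFinset] at hx
    exact flipBit_ne hi hx.1.2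
  · intro x hx
    simp only [Finset.mem_filter, Set.Finite.mem_toFinset] at hx ⊢
    have hp : proj i (flipBit n i x) ∈ π i := by
      rw [flipBit, proj_update]; exact hx.2
    exact ⟨⟨mem_of_proj_mem hξ i _ hp, flipBit_mem hi hx.1.2⟩, hp⟩
  · intro x hx
    simp only [Finset.mem_filter, Set.Finite.mem_toFinset] at hx
    exact flipBit_flipBit hi hx.1.2
end

section
/- Let ξ be a solid partition with legs (π¹,π²,π³,π⁴) with π⁴ = ∅. Then Σ_{□ ∈ ξ_fin} (1 − nlegs(□)) · ( |ξ ∩ S₋(□)| + Σ_{□' ∈ ξ ∩ S₊(□)} nlegs(□') ) ≡ NP₄(ξ) (mod 2), all sums involved being finite. (This is the combinatorial form of the paper's Lemma: the rank of the A-fixed part of the character C(ξ_fin, ξ)·t₄^{-1}·τ₁₂₃^∨ is congruent to NP₄(ξ) modulo 2.) -/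
open scoped BigOperators

theorem DownClosed.lower {d : ℕ} {S : Set (Fin d → ℕ)} (hS : DownClosed S) :
    ∀ (n : ℕ) (p q : Fin d → ℕ), ∑ i, p i = n → p ∈ S → q ≤ p → q ∈ S := by
  intro n
  induction n with
  | zero =>
    intro p q hn hp hq
    have h0 : ∀ i, p i = 0 := by simpa using hn
    have : q = p := by
      funext i
      have : q i ≤ p i := hq i
      have := h0 i
      omega
    rwa [this]
  | succ n ih =>
    intro p q hn hp hq
    by_cases hqp : q = p
    · rwa [hqp]
    · obtain ⟨i, hi⟩ := Function.ne_iff.mp hqp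
      have hlt : q i < p i := lt_of_le_of_ne (hq i) hi
      refine ih (Function.update p i (p i - 1)) q ?_ (hS p hp i (by omega)) ?_
      · have h1 := Finset.sum_update_of_mem (Finset.mem_univ i) p (p i - 1)
        have h2 := Finset.add_sum_erase Finset.univ p (Finset.mem_univ i)
        rw [Finset.sdiff_singleton_eq_erase] at h1
        omega
      · intro j
        by_cases hj : j = i
        · subst hj
          simp
          omega
        · simpa [Function.update_of_ne hj] using hq j

theorem leg_subset {π : Fin 4 → Set (Fin 3 → ℕ)} {ξ : Set (Fin 4 → ℕ)}
    (hξ : IsSolidPartitionWithLegs π ξ) (i : Fin 4) (x : Fin 4 → ℕ) (hx : proj i x ∈ π i) :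
    x ∈ ξ := by
  obtain ⟨-, hd, N, hN⟩ := hξ
  refine hd.lower _ (Function.update x i (max N (x i))) x rfl ?_ ?_
  · rw [hN i _ (by simp)]
    have : proj i (Function.update x i (max N (x i))) = proj i x := by
      funext j
      simp [proj]
    rwa [this]
  · intro j
    by_cases hj : j = i
    · subst hj
      simp
    · simp [Function.update_of_ne hj]

theorem leg_bound {π : Fin 4 → Set (Fin 3 → ℕ)} (h : ∀ i, (π i).Finite) :
    ∃ M : ℕ, ∀ i, ∀ x : Fin 4 → ℕ, proj i x ∈ π i → ∀ k, k ≠ i → x k ≤ M := by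
  have hf : (⋃ i, π i).Finite := Set.finite_iUnion h
  obtain ⟨b, hb⟩ := hf.bddAbove
  refine ⟨∑ j, b j, fun i x hx k hk => ?_⟩
  obtain ⟨j, rfl⟩ := Fin.exists_succAbove_eq hk
  have h1 := hb (Set.mem_iUnion.mpr ⟨i, hx⟩) j
  exact h1.trans (Finset.single_le_sum (f := b) (fun _ _ => Nat.zero_le _) (Finset.mem_univ j))

theorem fin_finite {π : Fin 4 → Set (Fin 3 → ℕ)} {ξ : Set (Fin 4 → ℕ)}
    (hξ : IsSolidPartitionWithLegs π ξ) : {p ∈ ξ | nlegs π p ≠ 1}.Finite := by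
  obtain ⟨M, hM⟩ := leg_bound (fun i => (hξ.1 i).1)
  obtain ⟨-, hd, N, hN⟩ := hξ
  refine (Set.finite_Iic (fun _ : Fin 4 => N + M)).subset ?_
  rintro p ⟨hp, hl⟩ k
  by_contra hk
  simp only [not_le] at hk
  have hkl : proj k p ∈ π k := (hN k p (by omega)).1 hp
  apply hl
  rw [nlegs, Set.ncard_eq_one]
  refine ⟨k, ?_⟩
  ext j
  simp only [Set.mem_ofPred_eq, Set.mem_singleton_iff]
  constructor
  · intro hj
    by_contra hne
    have := hM j p hj k (Ne.symm hne)
    omega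
  · rintro rfl
    exact hkl

theorem Sminus_le {p x : Fin 4 → ℕ} (hx : x ∈ Sminus p) : x ≤ p := by
  obtain ⟨ε, hε, m, h⟩ := hx
  intro t
  have := h t
  show x t ≤ p t
  split_ifs at this <;> omega

/-- slices of `Sminus` -/
def slice (p : Fin 4 → ℕ) (m : ℕ) : Finset (Fin 4 → ℕ) :=
  Fintype.piFinset (fun t : Fin 4 =>
    if t = 3 then {p 3 - 1 - m} else (Finset.Icc (p t - m - 1) (p t - m)).filter (fun _ => m ≤ p t))

theorem mem_slice (p : Fin 4 → ℕ) (m : ℕ) (x : Fin 4 → ℕ) :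
    x ∈ slice p m ↔ ((p 0 - m - 1 ≤ x 0 ∧ x 0 ≤ p 0 - m) ∧ m ≤ p 0) ∧
      ((p 1 - m - 1 ≤ x 1 ∧ x 1 ≤ p 1 - m) ∧ m ≤ p 1) ∧
      ((p 2 - m - 1 ≤ x 2 ∧ x 2 ≤ p 2 - m) ∧ m ≤ p 2) ∧ x 3 = p 3 - 1 - m := by
  have e0 : ¬ ((0 : Fin 4) = 3) := by decide
  have e1 : ¬ ((1 : Fin 4) = 3) := by decide
  have e2 : ¬ ((2 : Fin 4) = 3) := by decide
  rw [slice, Fintype.mem_piFinset, Fin.forall_fin_succ, Fin.forall_fin_succ, Fin.forall_fin_succ,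
    Fin.forall_fin_one]
  change (x 0 ∈ _ ∧ x 1 ∈ _ ∧ x 2 ∈ _ ∧ x 3 ∈ _) ↔ _
  refine and_congr ?_ (and_congr ?_ (and_congr ?_ ?_))
  · rw [if_neg e0, Finset.mem_filter, Finset.mem_Icc]
  · change x 1 ∈ (if (1 : Fin 4) = 3 then _ else
      (Finset.Icc (p 1 - m - 1) (p 1 - m)).filter (fun _ => m ≤ p 1)) ↔ _
    rw [if_neg e1, Finset.mem_filter, Finset.mem_Icc]
  · change x 2 ∈ (if (2 : Fin 4) = 3 then _ else
      (Finset.Icc (p 2 - m - 1) (p 2 - m)).filter (fun _ => m ≤ p 2)) ↔ _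
    rw [if_neg e2, Finset.mem_filter, Finset.mem_Icc]
  · change x 3 ∈ (if (3 : Fin 4) = 3 then {p 3 - 1 - m} else _) ↔ _
    rw [if_pos rfl, Finset.mem_singleton]

theorem Sminus_eq (p : Fin 4 → ℕ) :
    Sminus p = ((Finset.range (p 3)).biUnion (slice p) : Finset (Fin 4 → ℕ)) := by
  ext x
  simp only [Finset.coe_biUnion, Set.mem_iUnion, Finset.mem_coe, Finset.mem_range, mem_slice,
    exists_prop]
  constructor
  · rintro ⟨ε, hε, m, h⟩
    have h0 := h 0
    have h1 := h 1
    have h2 := h 2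
    have h3 := h 3
    have g0 := hε 0
    have g1 := hε 1
    have g2 := hε 2
    simp at h0 h1 h2 h3
    exact ⟨m, by omega, by omega⟩
  · rintro ⟨m, hm, h0, h1, h2, h3⟩
    refine ⟨![p 0 - m - x 0, p 1 - m - x 1, p 2 - m - x 2], ?_, m, ?_⟩
    · intro t
      fin_cases t <;> simp <;> omega
    · intro t
      fin_cases t <;> simp <;> omega

theorem slice_card (p : Fin 4 → ℕ) (m : ℕ) :
    ((slice p m).card : ZMod 2) = if p 0 = m ∧ p 1 = m ∧ p 2 = m then 1 else 0 := by
  have key : ∀ a : ℕ, ((((Finset.Icc (a - m - 1) (a - m)).filter (fun _ => m ≤ a)).card : ℕ) : ZMod 2)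
      = if a = m then 1 else 0 := by
    intro a
    by_cases h1 : m ≤ a
    · rw [Finset.filter_true_of_mem (fun _ _ => h1), Nat.card_Icc]
      split_ifs with h
      · subst h
        simp
      · have : a - m + 1 - (a - m - 1) = 2 := by omega
        rw [this]
        rfl
    · rw [Finset.filter_false_of_mem (fun _ _ => h1), if_neg (by omega)]
      simp
  rw [slice, Fintype.card_piFinset, Fin.prod_univ_four]
  have e0 : ¬ ((0 : Fin 4) = 3) := by decide
  have e1 : ¬ ((1 : Fin 4) = 3) := by decide
  have e2 : ¬ ((2 : Fin 4) = 3) := by decide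
  rw [if_neg e0, if_neg e1, if_neg e2, if_pos rfl]
  push_cast
  rw [key, key, key]
  simp only [Finset.card_singleton]
  split_ifs <;> simp_all

theorem minus_parity {ξ : Set (Fin 4 → ℕ)} (hd : DownClosed ξ) (p : Fin 4 → ℕ) (hp : p ∈ ξ) :
    ((ξ ∩ Sminus p).ncard : ZMod 2) =
      if p 0 = p 1 ∧ p 1 = p 2 ∧ p 2 < p 3 then 1 else 0 := by
  have h1 : ξ ∩ Sminus p = Sminus p :=
    Set.inter_eq_right.mpr (fun x hx => hd.lower _ p x rfl hp (Sminus_le hx))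
  rw [h1, Sminus_eq, Set.ncard_coe_finset, Finset.card_biUnion]
  · push_cast
    simp only [slice_card]
    by_cases hc : p 0 = p 1 ∧ p 1 = p 2 ∧ p 2 < p 3
    · rw [if_pos hc, Finset.sum_eq_single (p 2)]
      · rw [if_pos]
        omega
      · intro m _ hm
        rw [if_neg]
        omega
      · intro h
        simp at h
        omega
    · rw [if_neg hc]
      refine Finset.sum_eq_zero (fun m hm => ?_)
      rw [Finset.mem_range] at hm
      rw [if_neg]
      omega
  · intro m hm m' hm' hne
    show Disjoint (slice p m) (slice p m')
    rw [Finset.disjoint_left]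
    intro x hx hx'
    rw [mem_slice] at hx hx'
    simp at hm hm'
    omega

theorem Splus_flip (i : Fin 4) (hi : i ≠ 3) (p x : Fin 4 → ℕ) (hx : x ∈ Splus p) :
    ∃ y ∈ Splus p, y = Function.update x i (2 * p i + 2 * (x 3 - p 3) + 1 - x i) ∧ y i ≠ x i ∧
      x i ≤ 2 * p i + 2 * (x 3 - p 3) + 1 := by
  obtain ⟨ε, hε, m, h⟩ := hx
  have h3 := h 3
  simp at h3
  have hi3 : (i : ℕ) < 3 := by omega
  have hxi := h i
  rw [dif_pos hi3] at hxi
  have hεi := hε ⟨i, hi3⟩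
  refine ⟨_, ⟨Function.update ε ⟨i, hi3⟩ (1 - ε ⟨i, hi3⟩), ?_, m, ?_⟩, rfl, ?_, ?_⟩
  · intro t
    by_cases ht : t = ⟨i, hi3⟩
    · subst ht
      simp
    · rw [Function.update_of_ne ht]
      exact hε t
  · intro t
    by_cases ht : t = i
    · subst ht
      rw [dif_pos hi3]
      simp only [Function.update_self]
      omega
    · rw [Function.update_of_ne ht, h t]
      by_cases h' : (t : ℕ) < 3
      · rw [dif_pos h', dif_pos h', Function.update_of_ne]
        intro hc
        apply ht
        ext
        simpa using hc
      · rw [dif_neg h', dif_neg h']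
  · simp only [Function.update_self]
    omega
  · omega

theorem plus_parity {π : Fin 4 → Set (Fin 3 → ℕ)} {ξ : Set (Fin 4 → ℕ)}
    (hξ : IsSolidPartitionWithLegs π ξ) (h4 : π 3 = ∅) (p : Fin 4 → ℕ)
    (hf : (ξ ∩ Splus p).Finite) :
    ((∑ᶠ x ∈ ξ ∩ Splus p, (nlegs π x : ℤ) : ℤ) : ZMod 2) = 0 := by
  classical
  rw [finsum_mem_eq_finite_toFinset_sum _ hf]
  have hn : ∀ x, nlegs π x = ∑ i : Fin 4, if proj i x ∈ π i then 1 else 0 := by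
    intro x
    rw [nlegs, Set.ncard_eq_toFinset_card', Set.toFinset_ofPred, Finset.card_filter]
  simp only [hn]
  push_cast
  rw [Finset.sum_comm]
  refine Finset.sum_eq_zero (fun i _ => ?_)
  by_cases hi : i = 3
  · subst hi
    simp [h4]
  have hproj : ∀ (x : Fin 4 → ℕ) v, proj i (Function.update x i v) = proj i x := by
    intro x v
    funext j
    simp [proj]
  rw [← Finset.sum_filter]
  refine Finset.sum_involution
    (fun x _ => Function.update x i (2 * p i + 2 * (x 3 - p 3) + 1 - x i)) ?_ ?_ ?_ ?_
  · intro x _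
    rfl
  · intro x hx _ he
    simp only [Finset.mem_filter, Set.Finite.mem_toFinset] at hx
    obtain ⟨y, -, rfl, hy, -⟩ := Splus_flip i hi p x hx.1.2
    exact hy (congrFun he i)
  · intro x hx
    simp only [Finset.mem_filter, Set.Finite.mem_toFinset] at hx ⊢
    obtain ⟨y, hy, rfl, -, -⟩ := Splus_flip i hi p x hx.1.2
    have hl : proj i (Function.update x i (2 * p i + 2 * (x 3 - p 3) + 1 - x i)) ∈ π i := by
      rw [hproj]
      exact hx.2
    exact ⟨⟨leg_subset hξ i _ hl, hy⟩, hl⟩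
  · intro x hx
    simp only [Finset.mem_filter, Set.Finite.mem_toFinset] at hx
    obtain ⟨y, -, -, -, hle⟩ := Splus_flip i hi p x hx.1.2
    have h3i : (3 : Fin 4) ≠ i := Ne.symm hi
    simp only [Function.update_self, Function.update_of_ne h3i, Function.update_idem]
    rw [Nat.sub_sub_self hle, Function.update_eq_self]

/-- for a solid partition `ξ` with legs `(π¹,π²,π³,π⁴)`, `π⁴ = ∅`:
`Σ_{□ ∈ ξ_fin} (1 − nlegs □)·(|ξ ∩ S₋(□)| + Σ_{□' ∈ ξ ∩ S₊(□)} nlegs □') ≡ NP₄(ξ) mod 2`,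
all sums involved being finite. -/
theorem NP_sign_from_canonical_half
    (π : Fin 4 → Set (Fin 3 → ℕ)) (ξ : Set (Fin 4 → ℕ))
    (hξ : IsSolidPartitionWithLegs π ξ) (h4 : π 3 = ∅) :
    {p ∈ ξ | nlegs π p ≠ 1}.Finite ∧
    {p ∈ ξ | p 0 = p 1 ∧ p 1 = p 2 ∧ p 2 < p 3}.Finite ∧
    (∀ p : Fin 4 → ℕ, (ξ ∩ Sminus p).Finite ∧ (ξ ∩ Splus p).Finite) ∧
    Int.ModEq 2
      (∑ᶠ p ∈ {p ∈ ξ | nlegs π p ≠ 1},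
        (1 - (nlegs π p : ℤ)) *
          (((ξ ∩ Sminus p).ncard : ℤ) + ∑ᶠ x ∈ ξ ∩ Splus p, (nlegs π x : ℤ)))
      (∑ᶠ p ∈ {p ∈ ξ | p 0 = p 1 ∧ p 1 = p 2 ∧ p 2 < p 3}, (1 - (nlegs π p : ℤ))) := by
  classical
  have hfin := fin_finite hξ
  have hd := hξ.2.1
  obtain ⟨N, hN⟩ := hξ.2.2
  have h3 : ∀ x ∈ ξ, x 3 < N := by
    intro x hx
    by_contra hc
    have := (hN 3 x (by omega)).1 hx
    rw [h4] at this
    exact this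
  have hfin2 : {p ∈ ξ | p 0 = p 1 ∧ p 1 = p 2 ∧ p 2 < p 3}.Finite := by
    refine (Set.finite_Iic (fun _ : Fin 4 => N)).subset ?_
    rintro p ⟨hp, h⟩ t
    have := h3 p hp
    fin_cases t <;> simp <;> omega
  have hpl : ∀ p : Fin 4 → ℕ, (ξ ∩ Splus p).Finite := by
    intro p
    refine (Set.finite_Iic (fun t : Fin 4 => p t + 1 + N)).subset ?_
    rintro x ⟨hx, ε, hε, m, h⟩ t
    have h1 := h3 x hx
    have h2 := h 3
    simp at h2
    have h5 := h t
    show x t ≤ p t + 1 + N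
    split_ifs at h5 with h6
    · have := hε ⟨t, h6⟩
      omega
    · omega
  refine ⟨hfin, hfin2, fun p => ⟨?_, hpl p⟩, ?_⟩
  · exact (Set.finite_Iic p).subset (fun x hx => Sminus_le hx.2)
  have hgoal : ((∑ᶠ p ∈ {p ∈ ξ | nlegs π p ≠ 1},
        (1 - (nlegs π p : ℤ)) *
          (((ξ ∩ Sminus p).ncard : ℤ) + ∑ᶠ x ∈ ξ ∩ Splus p, (nlegs π x : ℤ)) : ℤ) : ZMod 2) =
      ((∑ᶠ p ∈ {p ∈ ξ | p 0 = p 1 ∧ p 1 = p 2 ∧ p 2 < p 3}, (1 - (nlegs π p : ℤ)) : ℤ) :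
        ZMod 2) := by
    rw [finsum_mem_eq_finite_toFinset_sum _ hfin, finsum_mem_eq_finite_toFinset_sum _ hfin2,
      Int.cast_sum, Int.cast_sum]
    have hL : ∀ p ∈ hfin.toFinset, (((1 - (nlegs π p : ℤ)) *
          (((ξ ∩ Sminus p).ncard : ℤ) + ∑ᶠ x ∈ ξ ∩ Splus p, (nlegs π x : ℤ)) : ℤ) : ZMod 2) =
        if p 0 = p 1 ∧ p 1 = p 2 ∧ p 2 < p 3 then ((1 - (nlegs π p : ℤ) : ℤ) : ZMod 2) else 0 := by
      intro p hp
      rw [Set.Finite.mem_toFinset] at hp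
      rw [Int.cast_mul, Int.cast_add, plus_parity hξ h4 p (hpl p), Int.cast_natCast,
        minus_parity hd p hp.1]
      split_ifs <;> simp
    rw [Finset.sum_congr rfl hL, ← Finset.sum_filter]
    refine Finset.sum_subset ?_ ?_
    · intro p hp
      simp only [Finset.mem_filter, Set.Finite.mem_toFinset] at hp ⊢
      exact ⟨hp.1.1, hp.2⟩
    · intro p hp hp'
      simp only [Finset.mem_filter, Set.Finite.mem_toFinset] at hp hp'
      have : nlegs π p = 1 := by
        by_contra hc
        exact hp' ⟨⟨hp.1, hc⟩, hp.2⟩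
      simp [this]
  exact (ZMod.intCast_eq_intCast_iff _ _ 2).1 hgoal
end

section
/- Let ξ be a solid partition with legs (π¹,π²,π³,π⁴). Then: (i) the set ξ_fin = {□ ∈ ξ : nlegs(□) ≠ 1} is finite; (ii) if moreover π⁴ = ∅, then the set {(n₁,n₂,n₃,n₄) ∈ ξ : n₁ = n₂ = n₃ < n₄} is finite (so the sum defining NP₄(ξ) is finite), and for every □ ∈ ℕ⁴ the set ξ ∩ S₊(□) is finite. -/
open scoped BigOperators

/-- A common strict bound for the coordinates of all boxes of all legs. -/
lemma exists_leg_bound (π : Fin 4 → Set (Fin 3 → ℕ)) (h : ∀ i, (π i).Finite) :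
    ∃ B : ℕ, ∀ i, ∀ q ∈ π i, ∀ j, q j ≤ B := by
  have hf : (⋃ i, π i).Finite := Set.finite_iUnion h
  obtain ⟨c, hc⟩ := hf.bddAbove
  refine ⟨Finset.univ.sup c, fun i q hq j => ?_⟩
  exact (hc (Set.mem_iUnion.2 ⟨i, hq⟩) j).trans (Finset.le_sup (f := c) (Finset.mem_univ j))

/-- for a solid partition `ξ` with legs `(π¹,π²,π³,π⁴)`:
(i) `ξ_fin = {□ ∈ ξ : nlegs(□) ≠ 1}` is finite;
(ii) if `π⁴ = ∅`, the index set of `NP₄(ξ)` is finite and `ξ ∩ S₊(□)` is finite for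
every `□ ∈ ℕ⁴`. -/
theorem solidPartition_finiteness
    (π : Fin 4 → Set (Fin 3 → ℕ)) (ξ : Set (Fin 4 → ℕ))
    (hξ : IsSolidPartitionWithLegs π ξ) :
    {p ∈ ξ | nlegs π p ≠ 1}.Finite ∧
    (π 3 = ∅ →
      {p ∈ ξ | p 0 = p 1 ∧ p 1 = p 2 ∧ p 2 < p 3}.Finite ∧
      ∀ n : Fin 4 → ℕ, (ξ ∩ Splus n).Finite) := by
  obtain ⟨hπ, -, N, hN⟩ := hξ
  obtain ⟨B, hB⟩ := exists_leg_bound π (fun i => (hπ i).1)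
  refine ⟨?_, fun h3 => ?_⟩
  · refine (Set.finite_Iic (fun _ : Fin 4 => N + B)).subset ?_
    rintro p ⟨hp, hne⟩ i
    by_contra hlt
    have hi : N + B < p i := by simpa using hlt
    apply hne
    have hset : {k : Fin 4 | proj k p ∈ π k} = {i} := by
      ext k
      simp only [Set.mem_setOf_eq, Set.mem_singleton_iff]
      constructor
      · intro hk
        by_contra hki
        obtain ⟨j, hj⟩ := Fin.exists_succAbove_eq (Ne.symm hki)
        have := hB k _ hk j
        simp only [proj, hj] at this
        omega
      · rintro rfl
        exact (hN k p (by omega)).1 hp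
    rw [nlegs, hset, Set.ncard_singleton]
  · have hlt : ∀ p ∈ ξ, p 3 < N := by
      intro p hp
      by_contra hge
      have := (hN 3 p (by omega)).1 hp
      simp [h3] at this
    refine ⟨?_, fun n => ?_⟩
    · refine (Set.finite_Iic (fun _ : Fin 4 => N)).subset ?_
      rintro p ⟨hp, h01, h12, h23⟩ i
      have := hlt p hp
      fin_cases i <;> simp <;> omega
    · refine (Set.finite_Iic (fun t : Fin 4 => n t + 1 + N)).subset ?_
      rintro p ⟨hp, ε, hε, m, hm⟩ t
      have h1 := hlt p hp
      have h2 := hm 3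
      have h4 := hm t
      have h5 : (if h : (t : ℕ) < 3 then ε ⟨t, h⟩ else 0) ≤ 1 := by
        split_ifs with h
        · exact hε _
        · omega
      show p t ≤ n t + 1 + N
      omega
end

section
/- Let k be a field, A an abelian group, and let V = ⊕_{λ∈A} V_λ and W = ⊕_{λ∈A} W_λ be finite-dimensional A-graded k-vector spaces such that dim V_λ ≤ 1 and dim W_λ ≤ 1 for every λ ∈ A. Let f : V → W be a linear map with f(V_λ) ⊆ W_λ for all λ, and suppose f is injective or surjective. Let N ⊆ V and P ⊆ W be graded subspaces (N = ⊕_λ (N ∩ V_λ), P = ⊕_λ (P ∩ W_λ)) with f(N) ⊆ P. Then for every λ ∈ A with N ∩ V_λ ≠ 0 and W_λ ≠ 0 one has W_λ ⊆ P; consequently the vector space of grade-preserving linear maps N → W (maps g with g(N ∩ V_λ) ⊆ W_λ for all λ) has the same dimension as the vector space of grade-preserving linear maps N → P. -/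
/-! STATEMENT 13: for `A`-graded finite-dimensional vector spaces `V, W` with all graded
pieces of dimension `≤ 1`, a grade-preserving linear map `f : V → W` which is injective
or surjective, and graded subspaces `N ⊆ V`, `P ⊆ W` with `f(N) ⊆ P`: for every `λ` with
`N ∩ V_λ ≠ 0` and `W_λ ≠ 0` one has `W_λ ⊆ P`, and consequently the space of
grade-preserving linear maps `N → W` has the same dimension as the space of
grade-preserving linear maps `N → P`. -/

open Module

/-- The subspace of `Hom(N, W)` consisting of the grade-preserving linear maps
(`g(N ∩ V_a) ⊆ W_a` for all `a`) whose image is contained in `P`. -/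
def gradedMaps {k A V W : Type*} [Field k]
    [AddCommGroup V] [Module k V] [AddCommGroup W] [Module k W]
    (Vl : A → Submodule k V) (Wl : A → Submodule k W)
    (N : Submodule k V) (P : Submodule k W) : Submodule k (N →ₗ[k] W) where
  carrier := { g | (∀ a : A, ∀ x : V, ∀ hx : x ∈ N, x ∈ Vl a → g ⟨x, hx⟩ ∈ Wl a) ∧
    ∀ y : N, g y ∈ P }
  add_mem' := by
    rintro g h ⟨hg1, hg2⟩ ⟨hh1, hh2⟩
    refine ⟨fun a x hx hxa => ?_, fun y => ?_⟩
    · simpa using (Wl a).add_mem (hg1 a x hx hxa) (hh1 a x hx hxa)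
    · simpa using P.add_mem (hg2 y) (hh2 y)
  zero_mem' :=
    ⟨fun a x hx _ => by simp, fun y => by simp⟩
  smul_mem' := by
    rintro c g ⟨hg1, hg2⟩
    refine ⟨fun a x hx hxa => ?_, fun y => ?_⟩
    · simpa using (Wl a).smul_mem c (hg1 a x hx hxa)
    · simpa using P.smul_mem c (hg2 y)

theorem exists_smul_of_finrank_le_one {k V : Type*} [Field k] [AddCommGroup V] [Module k V]
    [FiniteDimensional k V] (S : Submodule k V) (h : finrank k S ≤ 1) {x y : V}
    (hx : x ∈ S) (hx0 : x ≠ 0) (hy : y ∈ S) : ∃ c : k, c • x = y := by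
  obtain ⟨v, hv⟩ := finrank_le_one_iff.1 h
  obtain ⟨c, hc⟩ := hv ⟨x, hx⟩
  obtain ⟨d, hd⟩ := hv ⟨y, hy⟩
  have hc' : c • (v : V) = x := congrArg Subtype.val hc
  have hd' : d • (v : V) = y := congrArg Subtype.val hd
  have hc0 : c ≠ 0 := by
    rintro rfl
    exact hx0 (by rw [← hc', zero_smul])
  refine ⟨d * c⁻¹, ?_⟩
  rw [← hc', ← hd', smul_smul, mul_assoc, inv_mul_cancel₀ hc0, mul_one]

theorem graded_hom_space_dimensions_eq
    {k A V W : Type*} [Field k] [AddCommGroup A] [DecidableEq A]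
    [AddCommGroup V] [Module k V] [FiniteDimensional k V]
    [AddCommGroup W] [Module k W] [FiniteDimensional k W]
    (Vl : A → Submodule k V) (Wl : A → Submodule k W)
    (hV : DirectSum.IsInternal Vl) (hW : DirectSum.IsInternal Wl)
    (hVdim : ∀ a, finrank k (Vl a) ≤ 1) (hWdim : ∀ a, finrank k (Wl a) ≤ 1)
    (f : V →ₗ[k] W) (hf : ∀ a, (Vl a).map f ≤ Wl a)
    (hbij : Function.Injective f ∨ Function.Surjective f)
    (N : Submodule k V) (P : Submodule k W)
    (hN : N = ⨆ a, N ⊓ Vl a) (hP : P = ⨆ a, P ⊓ Wl a)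
    (hNP : N.map f ≤ P) :
    (∀ a, N ⊓ Vl a ≠ ⊥ → Wl a ≠ ⊥ → Wl a ≤ P) ∧
      finrank k (gradedMaps Vl Wl N (⊤ : Submodule k W)) =
        finrank k (gradedMaps Vl Wl N P) := by
  have key : ∀ a, N ⊓ Vl a ≠ ⊥ → Wl a ≠ ⊥ → Wl a ≤ P := by
    intro a hNa hWa
    obtain ⟨x, hx, hx0⟩ := Submodule.exists_mem_ne_zero_of_ne_bot hNa
    have hfx : f x ≠ 0 := by
      rcases hbij with hinj | hsurj
      · exact fun h => hx0 (hinj (by rw [h, map_zero]))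
      · intro h
        apply hWa
        have hdis := hW.submodule_iSupIndep a
        have htop : (⨆ (b) (_ : b ≠ a), Wl b) = ⊤ := by
          rw [eq_top_iff, ← LinearMap.range_eq_top.2 hsurj, LinearMap.range_eq_map,
            ← hV.submodule_iSup_eq_top, Submodule.map_iSup]
          refine iSup_le fun b => ?_
          by_cases hb : b = a
          · subst hb
            rintro _ ⟨y, hy, rfl⟩
            obtain ⟨c, rfl⟩ := exists_smul_of_finrank_le_one _ (hVdim b) hx.2 hx0 hy
            rw [map_smul, h, smul_zero]
            exact Submodule.zero_mem _
          · exact (hf b).trans (le_iSup₂_of_le b hb le_rfl)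
        rw [htop] at hdis
        exact disjoint_top.1 hdis
    intro w hw
    obtain ⟨c, rfl⟩ := exists_smul_of_finrank_le_one _ (hWdim a)
      (hf a ⟨x, hx.2, rfl⟩) hfx hw
    exact P.smul_mem c (hNP ⟨x, hx.1, rfl⟩)
  refine ⟨key, ?_⟩
  have heq : gradedMaps Vl Wl N (⊤ : Submodule k W) = gradedMaps Vl Wl N P := by
    ext g
    refine ⟨fun hg => ⟨hg.1, ?_⟩, fun hg => ⟨hg.1, fun _ => Submodule.mem_top⟩⟩
    have hle : N ≤ (P.comap g).map N.subtype := by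
      conv_lhs => rw [hN]
      refine iSup_le fun a x hx => ?_
      refine ⟨⟨x, hx.1⟩, ?_, rfl⟩
      change g ⟨x, hx.1⟩ ∈ P
      have hgx := hg.1 a x hx.1 hx.2
      by_cases hWa : Wl a = ⊥
      · rw [hWa, Submodule.mem_bot] at hgx
        rw [hgx]
        exact P.zero_mem
      · by_cases hNa : N ⊓ Vl a = ⊥
        · have hx0 : x = 0 := by
            rw [hNa] at hx
            exact hx
          subst hx0
          have : (⟨0, hx.1⟩ : N) = 0 := rfl
          rw [this, map_zero]
          exact P.zero_mem
        · exact key a hNa hWa hgx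
    intro y
    obtain ⟨z, hz, hzy⟩ := hle y.2
    have : z = y := Subtype.ext hzy
    rw [← this]
    exact hz
  rw [heq]
end
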